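/- Let U¹, …, Uⁿ, Φ be smooth extensions on ℝ^{n+1}_+ of u¹,…,uⁿ,φ ∈ C_c^∞(ℝⁿ) with appropriate decay, and let p₁,…,p_{n+1} ∈ (1,∞) with ∑ 1/p_i = 1. Then |∫_{ℝⁿ} det(∇_x u¹,…,∇_x uⁿ) φ dx| ≤ ∏_{i=1}^n ‖∇_{x,t} U^i‖_{L^{p_i}(ℝ^{n+1}_+)} · ‖∇_{x,t} Φ‖_{L^{p_{n+1}}(ℝ^{n+1}_+)}. -/

import Mathlib

open MeasureTheory
open scoped ENNReal BigOperators

/-- The `j`-th coordinate direction in the upper half space model `ℝⁿ × ℝ`: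
for `j < n` it is the `j`-th horizontal direction, for `j = n` the vertical (`t`) direction. -/
noncomputable def dir {n : ℕ} (j : Fin (n + 1)) : EuclideanSpace ℝ (Fin n) × ℝ :=
  if h : (j : ℕ) < n then (EuclideanSpace.single ⟨j, h⟩ 1, 0) else (0, 1)

/-- The `(n+1)×(n+1)` matrix whose `i`-th row is the full gradient `∇_{x,t} V^i`. -/
noncomputable def bulkMatrix {n : ℕ}
    (V : Fin (n + 1) → (EuclideanSpace ℝ (Fin n) × ℝ → ℝ))
    (p : EuclideanSpace ℝ (Fin n) × ℝ) : Matrix (Fin (n + 1)) (Fin (n + 1)) ℝ :=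
  Matrix.of fun i j => fderiv ℝ (V i) p (dir j)

/-- The `n×n` matrix whose `i`-th row is the gradient `∇_x u^i`. -/
noncomputable def bdryMatrix {n : ℕ} (u : Fin n → (EuclideanSpace ℝ (Fin n) → ℝ))
    (x : EuclideanSpace ℝ (Fin n)) : Matrix (Fin n) (Fin n) ℝ :=
  Matrix.of fun i j => fderiv ℝ (u i) x (EuclideanSpace.single j 1)

/-- The open upper half space `ℝ^{n+1}_+ = ℝⁿ × (0,∞)`. -/
def upperHalf (n : ℕ) : Set (EuclideanSpace ℝ (Fin n) × ℝ) := {p | 0 < p.2}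

/-!
Expanding `det ∇V` along the row of `Φ` writes it as `∑ⱼ ∂ⱼΦ · Cⱼ`, where the cofactors `Cⱼ` of
the remaining gradient rows are divergence free: after differentiation each remaining row pairs a
symmetric Hessian with a determinant that is antisymmetric in the same two indices. Hence
`det ∇V = ∑ⱼ ∂ⱼ(Φ Cⱼ)`, and on the upper half space the divergence theorem leaves only the vertical
flux through `t = 0`, whose cofactor is the boundary Jacobian determinant. The bulk integral is then
bounded by Hadamard's inequality, row by row, followed by Hölder's inequality.
-/

section LinearAlgebra

variable {ι R : Type*} [Fintype ι] [DecidableEq ι] [CommRing R]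

theorem det_updateRow_eq_sum_mul_adjugate (A : Matrix ι ι R) (i : ι) (r : ι → R) :
    (A.updateRow i r).det = ∑ j, r j * A.adjugate j i := by
  rw [← Matrix.cramer_transpose_apply, Matrix.cramer_eq_adjugate_mulVec,
    ← Matrix.adjugate_transpose]
  simp only [Matrix.mulVec, dotProduct, Matrix.transpose_apply, mul_comm]

theorem det_updateRow_updateRow_swap (A : Matrix ι ι R) {i l : ι} (hil : i ≠ l) (a b : ι → R) :
    ((A.updateRow l a).updateRow i b).det = -((A.updateRow l b).updateRow i a).det := by
  have swap_rows : (A.updateRow l a).updateRow i b =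
      ((A.updateRow l b).updateRow i a).submatrix (Equiv.swap i l) id := by
    ext k j
    rcases eq_or_ne k i with rfl | hki
    · simp [hil.symm]
    rcases eq_or_ne k l with rfl | hkl
    · simp [hil.symm]
    · simp [hki, hkl, Equiv.swap_apply_of_ne_of_ne]
  simp [swap_rows, Matrix.det_permute, Equiv.Perm.sign_swap hil]

theorem sum_sum_mul_eq_zero_of_symm_of_antisymm {κ S : Type*} [Fintype κ]
    [NonUnitalNonAssocRing S] [IsAddTorsionFree S] {a b : κ → κ → S}
    (ha : ∀ j k, a j k = a k j) (hb : ∀ j k, b j k = -b k j) :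
    ∑ j, ∑ k, a j k * b j k = 0 := by
  refine self_eq_neg.mp ?_
  calc ∑ j, ∑ k, a j k * b j k = ∑ k, ∑ j, a j k * b j k := Finset.sum_comm
    _ = ∑ k, ∑ j, -(a k j * b k j) := by
      refine Finset.sum_congr rfl fun k _ ↦ Finset.sum_congr rfl fun j _ ↦ ?_
      rw [ha j k, hb j k, mul_neg]
    _ = -∑ j, ∑ k, a j k * b j k := by simp only [Finset.sum_neg_distrib]

theorem abs_det_le_prod_norm_row (A : Matrix ι ι ℝ) :
    |A.det| ≤ ∏ i, ‖WithLp.toLp 2 (A i)‖ := by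
  let e := Fintype.equivFin ι
  let b := EuclideanSpace.basisFun ι ℝ
  let rows : ι → EuclideanSpace ℝ ι := fun i ↦ WithLp.toLp 2 (A i)
  have : Fact (Module.finrank ℝ (EuclideanSpace ℝ ι) = Fintype.card ι) := ⟨finrank_euclideanSpace⟩
  let o := (b.reindex e).toBasis.orientation
  have det_rows : (b.reindex e).toBasis.det (rows ∘ e.symm) = A.det := by
    rw [OrthonormalBasis.reindex_toBasis, Module.Basis.det_reindex, Module.Basis.det_apply,
      ← Matrix.det_transpose]
    congr 1
    ext i j
    simp [rows, b, Module.Basis.toMatrix_apply]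
  calc |A.det| = |o.volumeForm (rows ∘ e.symm)| := by
        rw [o.volumeForm_robust' (b.reindex e), det_rows]
    _ ≤ ∏ k, ‖rows (e.symm k)‖ := o.abs_volumeForm_apply_le _
    _ = ∏ i, ‖rows i‖ := e.symm.prod_comp fun i ↦ ‖rows i‖

end LinearAlgebra

section DetCalculus

variable {ι 𝕜 E : Type*} [Fintype ι] [DecidableEq ι] [NontriviallyNormedField 𝕜]
  [NormedAddCommGroup E] [NormedSpace 𝕜 E] {M : E → Matrix ι ι 𝕜}

theorem contDiff_det {k : WithTop ℕ∞} (hM : ∀ i j, ContDiff 𝕜 k fun q ↦ M q i j) :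
    ContDiff 𝕜 k fun q ↦ (M q).det := by
  simp only [Matrix.det_apply]
  exact ContDiff.sum fun σ _ ↦ (contDiff_prod fun i _ ↦ hM (σ i) i).const_smul _

theorem fderiv_det_apply {q : E} (hM : ∀ i j, DifferentiableAt 𝕜 (fun q ↦ M q i j) q) (w : E) :
    fderiv 𝕜 (fun q ↦ (M q).det) q w =
      ∑ i, ((M q).updateRow i fun j ↦ fderiv 𝕜 (fun q ↦ M q i j) q w).det := by
  let detL : ContinuousMultilinearMap 𝕜 (fun _ : ι ↦ ι → 𝕜) 𝕜 :=
    { (Matrix.detRowAlternating (n := ι) (R := 𝕜)).toMultilinearMap with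
      cont := Continuous.matrix_det continuous_id }
  have hrow (i : ι) : HasFDerivAt (fun q ↦ M q i)
      (ContinuousLinearMap.pi fun j ↦ fderiv 𝕜 (fun q ↦ M q i j) q) q :=
    hasFDerivAt_pi.2 fun j ↦ (hM i j).hasFDerivAt
  have hdet : HasFDerivAt (fun q ↦ (M q).det) _ q := HasFDerivAt.multilinear_comp detL hrow
  rw [hdet.fderiv]
  simp only [sum_apply]
  rfl

theorem contDiff_adjugate_apply {k : WithTop ℕ∞} {i₀ : ι}
    (hM : ∀ i ≠ i₀, ∀ j, ContDiff 𝕜 k fun q ↦ M q i j) (j : ι) :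
    ContDiff 𝕜 k fun q ↦ (M q).adjugate j i₀ := by
  simp only [Matrix.adjugate_apply]
  refine contDiff_det fun i k ↦ ?_
  rcases eq_or_ne i i₀ with rfl | hi
  · simpa only [Matrix.updateRow_self] using contDiff_const
  · simpa only [Matrix.updateRow_ne hi] using hM i hi k

theorem fderiv_adjugate_apply {i₀ : ι} {q : E}
    (hM : ∀ i ≠ i₀, ∀ j, DifferentiableAt 𝕜 (fun q ↦ M q i j) q) (w : E) (j : ι) :
    fderiv 𝕜 (fun q ↦ (M q).adjugate j i₀) q w =
      ∑ i ∈ Finset.univ.erase i₀, ∑ k, fderiv 𝕜 (fun q ↦ M q i k) q w *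
        (((M q).updateRow i₀ (Pi.single j 1)).updateRow i (Pi.single k 1)).det := by
  have updateRow_differentiable (i k : ι) :
      DifferentiableAt 𝕜 (fun q ↦ (M q).updateRow i₀ (Pi.single j 1) i k) q := by
    rcases eq_or_ne i i₀ with rfl | hi
    · simpa only [Matrix.updateRow_self] using differentiableAt_const _
    · simpa only [Matrix.updateRow_ne hi] using hM i hi k
  simp only [Matrix.adjugate_apply]
  rw [fderiv_det_apply updateRow_differentiable, ← Finset.add_sum_erase _ _ (Finset.mem_univ i₀)]
  have constant_row : ((M q).updateRow i₀ (Pi.single j 1)).updateRow i₀ (fun k ↦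
      fderiv 𝕜 (fun q ↦ (M q).updateRow i₀ (Pi.single j 1) i₀ k) q w) i₀ = 0 := by
    ext k
    simp
  rw [Matrix.det_eq_zero_of_row_eq_zero i₀ (congrFun constant_row), zero_add]
  refine Finset.sum_congr rfl fun i hi ↦ ?_
  rw [det_updateRow_eq_sum_mul_adjugate]
  simp only [Matrix.updateRow_ne (Finset.ne_of_mem_erase hi), Matrix.adjugate_apply]

end DetCalculus

section Jacobian

variable {ι E : Type*} [NormedAddCommGroup E] [NormedSpace ℝ E]

/-- The matrix of the derivatives of the functions `V i` in the directions `e j`. With `e` the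
coordinate directions it is definitionally `bulkMatrix` on the upper half space and `bdryMatrix` on
its boundary. -/
noncomputable def jacobianMatrix (e : ι → E) (V : ι → E → ℝ) (q : E) : Matrix ι ι ℝ :=
  Matrix.of fun i j ↦ fderiv ℝ (V i) q (e j)

theorem contDiff_jacobianMatrix_apply (e : ι → E) {V : ι → E → ℝ} {k : WithTop ℕ∞} {i : ι}
    (hV : ContDiff ℝ (k + 1) (V i)) (j : ι) : ContDiff ℝ k fun q ↦ jacobianMatrix e V q i j :=
  (hV.fderiv_right le_rfl).clm_apply contDiff_const

theorem fderiv_jacobianMatrix_apply (e : ι → E) {V : ι → E → ℝ} {i : ι} {q : E}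
    (hV : DifferentiableAt ℝ (fderiv ℝ (V i)) q) (j : ι) (w : E) :
    fderiv ℝ (fun q ↦ jacobianMatrix e V q i j) q w = fderiv ℝ (fderiv ℝ (V i)) q w (e j) := by
  simp [jacobianMatrix, fderiv_clm_apply hV (differentiableAt_const (e j))]

variable [Fintype ι] [DecidableEq ι] (e : ι → E) {V : ι → E → ℝ} {i₀ : ι}

theorem contDiff_adjugate_jacobianMatrix (hV : ∀ i ≠ i₀, ContDiff ℝ 2 (V i)) (j : ι) :
    ContDiff ℝ 1 fun q ↦ (jacobianMatrix e V q).adjugate j i₀ :=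
  contDiff_adjugate_apply (fun i hi ↦ contDiff_jacobianMatrix_apply e (k := 1) (hV i hi)) j

/-- The Piola identity. -/
theorem sum_fderiv_adjugate_jacobianMatrix_eq_zero (hV : ∀ i ≠ i₀, ContDiff ℝ 2 (V i)) (q : E) :
    ∑ j, fderiv ℝ (fun q ↦ (jacobianMatrix e V q).adjugate j i₀) q (e j) = 0 := by
  have rows_differentiable (i : ι) (hi : i ≠ i₀) (j : ι) :
      DifferentiableAt ℝ (fun q ↦ jacobianMatrix e V q i j) q :=
    (contDiff_jacobianMatrix_apply e (k := 1) (hV i hi) j).differentiable one_ne_zero q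
  simp only [fderiv_adjugate_apply rows_differentiable]
  rw [Finset.sum_comm]
  refine Finset.sum_eq_zero fun i hi ↦ ?_
  have hi₀ : i ≠ i₀ := Finset.ne_of_mem_erase hi
  have hessian_symm : IsSymmSndFDerivAt ℝ (V i) q :=
    (hV i hi₀).contDiffAt.isSymmSndFDerivAt (by simp)
  have differentiable_gradient : DifferentiableAt ℝ (fderiv ℝ (V i)) q :=
    ((hV i hi₀).fderiv_right (m := 1) le_rfl).differentiable one_ne_zero q
  simp only [fderiv_jacobianMatrix_apply e differentiable_gradient]
  exact sum_sum_mul_eq_zero_of_symm_of_antisymm (fun j k ↦ hessian_symm.eq (e j) (e k))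
    fun j k ↦ det_updateRow_updateRow_swap _ hi₀ _ _

theorem sum_fderiv_mul_adjugate_jacobianMatrix (hV : ∀ i ≠ i₀, ContDiff ℝ 2 (V i)) {q : E}
    (hV₀ : DifferentiableAt ℝ (V i₀) q) :
    ∑ j, fderiv ℝ (fun q ↦ V i₀ q * (jacobianMatrix e V q).adjugate j i₀) q (e j) =
      (jacobianMatrix e V q).det := by
  have product_rule (j : ι) :
      fderiv ℝ (fun q ↦ V i₀ q * (jacobianMatrix e V q).adjugate j i₀) q (e j) =
        V i₀ q * fderiv ℝ (fun q ↦ (jacobianMatrix e V q).adjugate j i₀) q (e j) +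
          jacobianMatrix e V q i₀ j * (jacobianMatrix e V q).adjugate j i₀ := by
    rw [fderiv_fun_mul hV₀ ((contDiff_adjugate_jacobianMatrix e hV j).differentiable one_ne_zero q)]
    simp [jacobianMatrix, mul_comm]
  simp only [product_rule]
  rw [Finset.sum_add_distrib, ← Finset.mul_sum, sum_fderiv_adjugate_jacobianMatrix_eq_zero e hV,
    mul_zero, zero_add, ← Matrix.det_eq_sum_mul_adjugate_row]

end Jacobian

section HalfSpaceDivergence

theorem fderiv_apply_mk_zero {𝕜 E E' G : Type*} [NontriviallyNormedField 𝕜]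
    [NormedAddCommGroup E] [NormedSpace 𝕜 E] [NormedAddCommGroup E'] [NormedSpace 𝕜 E']
    [NormedAddCommGroup G] [NormedSpace 𝕜 G] {F : E × E' → G} {x : E} {t : E'}
    (hF : DifferentiableAt 𝕜 F (x, t)) (v : E) :
    fderiv 𝕜 F (x, t) (v, 0) = fderiv 𝕜 (fun y ↦ F (y, t)) x v := by
  have slice : HasFDerivAt (fun y ↦ F (y, t)) _ x :=
    HasFDerivAt.comp (g := F) x hF.hasFDerivAt (hasFDerivAt_prodMk_left x t)
  simp [slice.fderiv]

variable {E G : Type*} [NormedAddCommGroup E] [NormedSpace ℝ E] [MeasurableSpace E] [BorelSpace E]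
  [NormedAddCommGroup G] [NormedSpace ℝ G]

theorem integrable_fderiv_apply {μ : Measure E} [IsFiniteMeasureOnCompacts μ] {F : E → G}
    (hF : ContDiff ℝ 1 F) (hF' : HasCompactSupport F) (v : E) :
    Integrable (fun x ↦ fderiv ℝ F x v) μ :=
  ((hF.continuous_fderiv one_ne_zero).clm_apply continuous_const).integrable_of_hasCompactSupport
    (hF'.fderiv_apply (𝕜 := ℝ) v)

theorem integral_halfSpace_fderiv_vertical [SecondCountableTopology E] [CompleteSpace G]
    {μ : Measure E} [IsFiniteMeasureOnCompacts μ] [SFinite μ] {F : E × ℝ → G} (hF : ContDiff ℝ 1 F)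
    (hF' : HasCompactSupport F) :
    ∫ q, fderiv ℝ F q (0, 1) ∂(μ.prod (volume.restrict (Set.Ioi 0))) = -∫ x, F (x, 0) ∂μ := by
  rw [integral_prod _ (integrable_fderiv_apply hF hF' _), ← integral_neg]
  refine integral_congr_ae (.of_forall fun x ↦ ?_)
  have slice_compact : HasCompactSupport fun t ↦ F (x, t) :=
    hF'.comp_isClosedEmbedding (Function.LeftInverse.isClosedEmbedding (f := Prod.snd)
      (fun _ ↦ rfl) continuous_snd (.prodMk_right x))
  have slice_deriv (t : ℝ) : fderiv ℝ F (x, t) (0, 1) = deriv (fun t ↦ F (x, t)) t :=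
    ((hF.differentiable one_ne_zero (x, t)).hasFDerivAt.comp_hasDerivAt t
      ((hasDerivAt_const t x).prodMk (hasDerivAt_id t))).deriv.symm
  simp only [slice_deriv]
  exact slice_compact.integral_Ioi_deriv_eq (hF.comp (contDiff_prodMk_right x)) 0

variable [FiniteDimensional ℝ E] {μ : Measure E} [μ.IsAddHaarMeasure]

theorem integral_fderiv_apply_eq_zero {F : E → G} (hF : ContDiff ℝ 1 F)
    (hF' : HasCompactSupport F) (v : E) : ∫ x, fderiv ℝ F x v ∂μ = 0 := by
  simpa using integral_smul_fderiv_eq_neg_fderiv_smul_of_integrable (μ := μ)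
    (f := fun _ ↦ (1 : ℝ)) (g := F) (v := v) (by simp)
    (by simpa using integrable_fderiv_apply hF hF' v)
    (by simpa using hF.continuous.integrable_of_hasCompactSupport hF')
    (fun _ _ ↦ differentiableAt_const _) (fun x _ ↦ hF.differentiable one_ne_zero x)

theorem integral_halfSpace_fderiv_horizontal {F : E × ℝ → G} (hF : ContDiff ℝ 1 F)
    (hF' : HasCompactSupport F) (v : E) :
    ∫ q, fderiv ℝ F q (v, 0) ∂(μ.prod (volume.restrict (Set.Ioi 0))) = 0 := by
  rw [integral_prod_symm _ (integrable_fderiv_apply hF hF' _)]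
  refine integral_eq_zero_of_ae (.of_forall fun t ↦ ?_)
  have slice_compact : HasCompactSupport fun x ↦ F (x, t) :=
    hF'.comp_isClosedEmbedding (Function.LeftInverse.isClosedEmbedding (f := Prod.fst)
      (fun _ ↦ rfl) continuous_fst (.prodMk_left t))
  simp only [fderiv_apply_mk_zero (hF.differentiable one_ne_zero _)]
  exact integral_fderiv_apply_eq_zero (hF.comp (contDiff_prodMk_left t)) slice_compact v

end HalfSpaceDivergence

section HadamardHolder

theorem norm_toLp_apply_le_opNorm {ι E : Type*} [Fintype ι] [SeminormedAddCommGroup E]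
    [NormedSpace ℝ E] {e : ι → E} (he : ∀ a : EuclideanSpace ℝ ι, ‖∑ j, a j • e j‖ ≤ ‖a‖)
    (T : E →L[ℝ] ℝ) : ‖WithLp.toLp 2 fun j ↦ T (e j)‖ ≤ ‖T‖ := by
  set g : EuclideanSpace ℝ ι := WithLp.toLp 2 fun j ↦ T (e j)
  have norm_sq_le : ‖g‖ * ‖g‖ ≤ ‖T‖ * ‖g‖ := calc
    ‖g‖ * ‖g‖ = T (∑ j, g j • e j) := by
      simp [g, ← pow_two, EuclideanSpace.norm_sq_eq]
    _ ≤ ‖T‖ * ‖∑ j, g j • e j‖ := (le_abs_self _).trans (T.le_opNorm _)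
    _ ≤ ‖T‖ * ‖g‖ := by gcongr; exact he g
  rcases (norm_nonneg g).eq_or_lt with hg | hg
  · exact hg ▸ norm_nonneg T
  · exact le_of_mul_le_mul_right norm_sq_le hg

theorem abs_det_jacobianMatrix_le {ι E : Type*} [Fintype ι] [DecidableEq ι] [NormedAddCommGroup E]
    [NormedSpace ℝ E] {e : ι → E} (he : ∀ a : EuclideanSpace ℝ ι, ‖∑ j, a j • e j‖ ≤ ‖a‖)
    (V : ι → E → ℝ) (q : E) : |(jacobianMatrix e V q).det| ≤ ∏ i, ‖fderiv ℝ (V i) q‖ :=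
  (abs_det_le_prod_norm_row _).trans <| Finset.prod_le_prod (fun _ _ ↦ norm_nonneg _)
    fun i _ ↦ norm_toLp_apply_le_opNorm he (fderiv ℝ (V i) q)

theorem eLpNorm_finsetProd_le {ι α 𝕜 : Type*} {_ : MeasurableSpace α} {μ : Measure α}
    [NormedCommRing 𝕜] [NormOneClass 𝕜] {s : Finset ι} {f : ι → α → 𝕜} (p : ι → ℝ≥0∞)
    (hf : ∀ i ∈ s, AEStronglyMeasurable (f i) μ) :
    eLpNorm (∏ i ∈ s, f i) (∑ i ∈ s, (p i)⁻¹)⁻¹ μ ≤ ∏ i ∈ s, eLpNorm (f i) (p i) μ := by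
  induction s using Finset.cons_induction with
  | empty =>
    rcases eq_or_ne μ 0 with rfl | hμ
    · simp
    · simp [Pi.one_def, eLpNormEssSup_const _ hμ]
  | cons i s hi ih =>
    have hs : ∀ k ∈ s, AEStronglyMeasurable (f k) μ := Finset.forall_of_forall_cons hf
    have : ENNReal.HolderTriple (p i) (∑ k ∈ s, (p k)⁻¹)⁻¹ (∑ k ∈ s.cons i hi, (p k)⁻¹)⁻¹ :=
      ⟨by simp⟩
    rw [Finset.prod_cons, Finset.prod_cons]
    calc eLpNorm (f i * ∏ k ∈ s, f k) (∑ k ∈ s.cons i hi, (p k)⁻¹)⁻¹ μ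
      _ ≤ eLpNorm (f i) (p i) μ * eLpNorm (∏ k ∈ s, f k) (∑ k ∈ s, (p k)⁻¹)⁻¹ μ :=
        eLpNorm_smul_le_mul_eLpNorm (φ := f i) (f := ∏ k ∈ s, f k)
          (Finset.aestronglyMeasurable_prod s hs) (hf i (Finset.mem_cons_self i s))
      _ ≤ eLpNorm (f i) (p i) μ * ∏ k ∈ s, eLpNorm (f k) (p k) μ := by gcongr; exact ih hs

theorem enorm_integral_det_jacobianMatrix_le {ι E : Type*} [Fintype ι] [DecidableEq ι]
    [NormedAddCommGroup E] [NormedSpace ℝ E] [MeasurableSpace E] [OpensMeasurableSpace E]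
    (μ : Measure E) {e : ι → E} (he : ∀ a : EuclideanSpace ℝ ι, ‖∑ j, a j • e j‖ ≤ ‖a‖)
    (V : ι → E → ℝ) {p : ι → ℝ≥0∞} (hp : ∑ i, (p i)⁻¹ = 1) :
    ‖∫ q, (jacobianMatrix e V q).det ∂μ‖ₑ ≤
      ∏ i, eLpNorm (fun q ↦ ‖fderiv ℝ (V i) q‖) (p i) μ := calc
  ‖∫ q, (jacobianMatrix e V q).det ∂μ‖ₑ ≤ ∫⁻ q, ‖(jacobianMatrix e V q).det‖ₑ ∂μ :=
    enorm_integral_le_lintegral_enorm _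
  _ = eLpNorm (fun q ↦ (jacobianMatrix e V q).det) 1 μ := eLpNorm_one_eq_lintegral_enorm.symm
  _ ≤ eLpNorm (∏ i, fun q ↦ ‖fderiv ℝ (V i) q‖) 1 μ :=
    eLpNorm_mono_real fun q ↦ by
      simpa only [Finset.prod_apply, Real.norm_eq_abs] using abs_det_jacobianMatrix_le he V q
  _ ≤ ∏ i, eLpNorm (fun q ↦ ‖fderiv ℝ (V i) q‖) (p i) μ := by
    simpa only [hp, inv_one] using eLpNorm_finsetProd_le (μ := μ) (s := Finset.univ) p fun i _ ↦
      (measurable_fderiv ℝ (V i)).norm.aestronglyMeasurable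

end HadamardHolder

section UpperHalf

variable {n : ℕ}

@[simp]
theorem dir_castSucc (j : Fin n) : dir j.castSucc = (EuclideanSpace.single j 1, 0) := by
  simp [dir]

@[simp]
theorem dir_last : dir (Fin.last n) = (0, 1) := by
  simp [dir]

theorem norm_sum_smul_dir_le (a : EuclideanSpace ℝ (Fin (n + 1))) : ‖∑ j, a j • dir j‖ ≤ ‖a‖ := by
  let x : EuclideanSpace ℝ (Fin n) := WithLp.toLp 2 fun j ↦ a j.castSucc
  have sum_eq : ∑ j, a j • dir j = (x, a (Fin.last n)) := by
    rw [Fin.sum_univ_castSucc]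
    ext k <;> simp [x, Prod.fst_sum, Prod.snd_sum, Pi.single_apply]
  have norm_sq : ‖a‖ ^ 2 = ‖x‖ ^ 2 + ‖a (Fin.last n)‖ ^ 2 := by
    simp only [EuclideanSpace.norm_sq_eq, Fin.sum_univ_castSucc, x]
  rw [sum_eq, Prod.norm_mk]
  refine max_le ?_ ?_ <;> refine le_of_sq_le_sq ?_ (norm_nonneg a) <;> rw [norm_sq]
  · exact le_add_of_nonneg_right (sq_nonneg _)
  · exact le_add_of_nonneg_left (sq_nonneg _)

theorem volume_restrict_upperHalf :
    volume.restrict (upperHalf n) =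
      (volume : Measure (EuclideanSpace ℝ (Fin n))).prod (volume.restrict (Set.Ioi 0)) := by
  have upperHalf_eq : upperHalf n = Set.univ ×ˢ Set.Ioi 0 := by
    ext
    simp [upperHalf]
  rw [upperHalf_eq, Measure.volume_eq_prod, ← Measure.prod_restrict, Measure.restrict_univ]

theorem integral_upperHalf_sum_fderiv_dir {X : Fin (n + 1) → EuclideanSpace ℝ (Fin n) × ℝ → ℝ}
    (hX : ∀ j, ContDiff ℝ 1 (X j)) (hX' : ∀ j, HasCompactSupport (X j)) :
    ∫ q in upperHalf n, ∑ j, fderiv ℝ (X j) q (dir j) = -∫ x, X (Fin.last n) (x, 0) := by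
  rw [integral_finsetSum _ fun j _ ↦ (integrable_fderiv_apply (hX j) (hX' j) _).restrict,
    volume_restrict_upperHalf, Fin.sum_univ_castSucc]
  simp [integral_halfSpace_fderiv_horizontal, integral_halfSpace_fderiv_vertical, hX, hX']

theorem adjugate_bulkMatrix_last {V : Fin (n + 1) → EuclideanSpace ℝ (Fin n) × ℝ → ℝ}
    {x : EuclideanSpace ℝ (Fin n)}
    (hV : ∀ i : Fin n, DifferentiableAt ℝ (V i.castSucc) (x, 0)) :
    (bulkMatrix V (x, 0)).adjugate (Fin.last n) (Fin.last n) =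
      (bdryMatrix (fun i y ↦ V i.castSucc (y, 0)) x).det := by
  have submatrix_eq : (bulkMatrix V (x, 0)).submatrix Fin.castSucc Fin.castSucc =
      bdryMatrix (fun i y ↦ V i.castSucc (y, 0)) x := by
    ext i j
    simp [bulkMatrix, bdryMatrix, fderiv_apply_mk_zero (hV i)]
  rw [Matrix.adjugate_fin_succ_eq_det_submatrix, Even.neg_one_pow (Even.add_self _), one_mul,
    Fin.succAbove_last, submatrix_eq]

theorem integral_upperHalf_det_bulkMatrix
    {V : Fin (n + 1) → EuclideanSpace ℝ (Fin n) × ℝ → ℝ}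
    (hV : ∀ i : Fin n, ContDiff ℝ 2 (V i.castSucc)) (hΦ : ContDiff ℝ 1 (V (Fin.last n)))
    (hΦ' : HasCompactSupport (V (Fin.last n))) :
    ∫ q in upperHalf n, (bulkMatrix V q).det =
      -∫ x, (bdryMatrix (fun i y ↦ V i.castSucc (y, 0)) x).det * V (Fin.last n) (x, 0) := by
  have hV' : ∀ i ≠ Fin.last n, ContDiff ℝ 2 (V i) :=
    Fin.lastCases (fun h ↦ absurd rfl h) fun i _ ↦ hV i
  let flux (j : Fin (n + 1)) (q : EuclideanSpace ℝ (Fin n) × ℝ) : ℝ :=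
    V (Fin.last n) q * (jacobianMatrix dir V q).adjugate j (Fin.last n)
  calc ∫ q in upperHalf n, (bulkMatrix V q).det
    _ = ∫ q in upperHalf n, ∑ j, fderiv ℝ (flux j) q (dir j) := integral_congr_ae <|
      .of_forall fun q ↦ (sum_fderiv_mul_adjugate_jacobianMatrix dir hV'
        (hΦ.differentiable one_ne_zero q)).symm
    _ = -∫ x, flux (Fin.last n) (x, 0) := integral_upperHalf_sum_fderiv_dir
      (fun j ↦ hΦ.mul (contDiff_adjugate_jacobianMatrix dir hV' j)) fun _ ↦ hΦ'.mul_right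
    _ = _ := by
      congr 2 with x
      rw [← adjugate_bulkMatrix_last fun i ↦ (hV i).differentiable two_ne_zero _, mul_comm]
      rfl

end UpperHalf

theorem sum_inv_ofReal_eq_one {ι : Type*} [Fintype ι] {p : ι → ℝ} (hp : ∀ i, 0 < p i)
    (hp1 : ∑ i, 1 / p i = 1) : ∑ i, (ENNReal.ofReal (p i))⁻¹ = 1 := by
  simp only [← ENNReal.ofReal_inv_of_pos (hp _)]
  rw [← ENNReal.ofReal_sum_of_nonneg fun i _ ↦ (inv_pos.2 (hp i)).le]
  simpa using hp1

theorem stmt10_general {n : ℕ} {u : Fin n → EuclideanSpace ℝ (Fin n) → ℝ}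
    {φ : EuclideanSpace ℝ (Fin n) → ℝ} {U : Fin n → EuclideanSpace ℝ (Fin n) × ℝ → ℝ}
    {Φ : EuclideanSpace ℝ (Fin n) × ℝ → ℝ} {p : Fin (n + 1) → ℝ≥0∞} (hp : ∑ i, (p i)⁻¹ = 1)
    (hU : ∀ i, ContDiff ℝ 2 (U i)) (hΦ : ContDiff ℝ 1 Φ) (hΦ' : HasCompactSupport Φ)
    (hext : ∀ i x, U i (x, 0) = u i x) (hextφ : ∀ x, Φ (x, 0) = φ x) :
    ENNReal.ofReal |∫ x, (bdryMatrix u x).det * φ x| ≤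
      (∏ i : Fin n, eLpNorm (fun q ↦ ‖fderiv ℝ (U i) q‖) (p i.castSucc)
        (volume.restrict (upperHalf n))) *
      eLpNorm (fun q ↦ ‖fderiv ℝ Φ q‖) (p (Fin.last n)) (volume.restrict (upperHalf n)) := by
  let V : Fin (n + 1) → EuclideanSpace ℝ (Fin n) × ℝ → ℝ := Fin.snoc (α := fun _ ↦ _) U Φ
  have V_castSucc (i : Fin n) : V i.castSucc = U i := by simp [V]
  have V_last : V (Fin.last n) = Φ := by simp [V]
  have stokes : ∫ q in upperHalf n, (bulkMatrix V q).det = -∫ x, (bdryMatrix u x).det * φ x := by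
    simpa only [V_castSucc, V_last, hext, hextφ] using integral_upperHalf_det_bulkMatrix (V := V)
      (by simpa only [V_castSucc] using hU) (V_last ▸ hΦ) (V_last ▸ hΦ')
  calc ENNReal.ofReal |∫ x, (bdryMatrix u x).det * φ x|
    _ = ‖∫ q in upperHalf n, (bulkMatrix V q).det‖ₑ := by
      rw [stokes, enorm_neg, Real.enorm_eq_ofReal_abs]
    _ ≤ ∏ i, eLpNorm (fun q ↦ ‖fderiv ℝ (V i) q‖) (p i) (volume.restrict (upperHalf n)) :=
      enorm_integral_det_jacobianMatrix_le _ norm_sum_smul_dir_le V hp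
    _ = _ := by simp only [Fin.prod_univ_castSucc, V_castSucc, V_last]

/-- The Stokes–Hadamard–Hölder estimate: for smooth compactly supported extensions
`U¹,…,Uⁿ,Φ` of `u¹,…,uⁿ,φ` and exponents `p₁,…,p_{n+1} ∈ (1,∞)` with `∑ 1/pᵢ = 1`,
`|∫_{ℝⁿ} det(∇_x u¹,…,∇_x uⁿ) φ| ≤ ∏ᵢ ‖∇_{x,t}Uⁱ‖_{L^{pᵢ}(ℝ^{n+1}_+)} ·
‖∇_{x,t}Φ‖_{L^{p_{n+1}}(ℝ^{n+1}_+)}`. -/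
theorem stmt10 {n : ℕ} (u : Fin n → EuclideanSpace ℝ (Fin n) → ℝ)
    (φ : EuclideanSpace ℝ (Fin n) → ℝ)
    (U : Fin n → EuclideanSpace ℝ (Fin n) × ℝ → ℝ)
    (Φ : EuclideanSpace ℝ (Fin n) × ℝ → ℝ)
    (p : Fin (n + 1) → ℝ) (hp : ∀ i, 1 < p i)
    (hp1 : ∑ i, 1 / p i = 1)
    (hu : ∀ i, ContDiff ℝ (⊤ : ℕ∞) (u i)) (hu' : ∀ i, HasCompactSupport (u i))
    (hφ : ContDiff ℝ (⊤ : ℕ∞) φ) (hφ' : HasCompactSupport φ)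
    (hU : ∀ i, ContDiff ℝ (⊤ : ℕ∞) (U i)) (hU' : ∀ i, HasCompactSupport (U i))
    (hΦ : ContDiff ℝ (⊤ : ℕ∞) Φ) (hΦ' : HasCompactSupport Φ)
    (hext : ∀ i x, U i (x, 0) = u i x) (hextφ : ∀ x, Φ (x, 0) = φ x) :
    ENNReal.ofReal |∫ x, (bdryMatrix u x).det * φ x| ≤
      (∏ i : Fin n,
        eLpNorm (fun q => ‖fderiv ℝ (U i) q‖) (ENNReal.ofReal (p (Fin.castSucc i)))
          (volume.restrict (upperHalf n))) *
      eLpNorm (fun q => ‖fderiv ℝ Φ q‖) (ENNReal.ofReal (p (Fin.last n)))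
        (volume.restrict (upperHalf n)) := by
  exact stmt10_general (sum_inv_ofReal_eq_one (fun i ↦ one_pos.trans (hp i)) hp1)
    (fun i ↦ (hU i).of_le (by norm_cast)) (hΦ.of_le (by norm_cast)) hΦ' hext hextφ
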